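/- Assume the postcritical orbit (c_k)_{k≥1} is dense in [c₂,c₁]. Let φ : I → ℂ be continuous and not f-symmetric on [c₂,c₁], i.e., there exist x, y ∈ [c₂,c₁] with f(x) = f(y) ∈ [c₂,c₁] and φ(x) ≠ φ(y). Then the set obtained from the renascent right limits of the sequence (φ(c_{k+1}))_{k≥0} by identifying two renascent right limits that differ at only finitely many indices is uncountable; equivalently, there exists an uncountable family of renascent right limits of (φ(c_{k+1}))_{k≥0} any two distinct members of which differ at infinitely many indices. -/

import Mathlib

open Filter Topology

/-- `b : ℤ → E` is a *right limit* of the sequence `a : ℕ → E`. -/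
def IsRightLimit {E : Type*} [TopologicalSpace E] (a : ℕ → E) (b : ℤ → E) : Prop :=
  ∃ k : ℕ → ℕ, StrictMono k ∧ (∀ j, 0 < k j) ∧
    ∀ n : ℤ, Tendsto (fun j => a (n + (k j : ℤ)).toNat) atTop (𝓝 (b n))

/-!
Mixing and the intermediate value theorem give disjoint intervals `A true`, `A false`, on which `φ`
takes disjoint sets of values, and one iterate `f^[N]` that maps each of them over both of them and
over `c`. Pulling `c` back along an arbitrary binary code therefore yields a backward `f^[N]`-orbit
of `c` that visits `A` in the prescribed order; it fills in to a two-sided `f`-orbit through `c`.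
Density makes every point of this backward orbit a cluster point of the postcritical orbit, and by
continuity of the iterates the whole two-sided orbit is then a right limit. Repeating each digit of
the code infinitely often turns distinct codes into sequences differing at infinitely many indices.
-/

open Set Function

/-! ### Right limits -/

section RightLimit

variable {X E : Type*} [TopologicalSpace X] [TopologicalSpace E]

/-- `b` is a renascent right limit of `a`: a right limit of `a` whose nonnegative half is `a`. -/
def IsRenascentRightLimit (a : ℕ → E) (b : ℤ → E) : Prop :=
  IsRightLimit a b ∧ ∀ n : ℕ, b n = a n

theorem IsRightLimit.comp_continuousOn {a : ℕ → X} {b : ℤ → X} (h : IsRightLimit a b)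
    {I : Set X} {φ : X → E} (hφ : ContinuousOn φ I) (ha : ∀ k, a k ∈ I) (hb : ∀ n, b n ∈ I) :
    IsRightLimit (fun k => φ (a k)) fun n => φ (b n) := by
  obtain ⟨k, hk, hpos, hlim⟩ := h
  exact ⟨k, hk, hpos, fun n => (hφ _ (hb n)).tendsto.comp <|
    tendsto_nhdsWithin_iff.2 ⟨hlim n, Eventually.of_forall fun _ => ha _⟩⟩

theorem isRightLimit_of_mapClusterPt [FirstCountableTopology E] {a : ℕ → E} {b : ℤ → E}
    (h : MapClusterPt b atTop fun (k : ℕ) (n : ℤ) => a (n + k).toNat) : IsRightLimit a b := by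
  obtain ⟨ψ, hψ, hlim⟩ := h.tendsto_subseq
  refine ⟨fun j => ψ (j + 1), hψ.comp (strictMono_id.add_const 1),
    fun j => j.succ_pos.trans_le hψ.le_apply, fun n => ?_⟩
  exact (tendsto_pi_nhds.1 hlim n).comp (tendsto_add_atTop_nat 1)

theorem mapClusterPt_atTop_of_mem_interior_closure_range [T1Space X] [∀ x : X, (𝓝[≠] x).NeBot]
    {y : ℕ → X} {z : X} (hz : z ∈ interior (closure (range y))) : MapClusterPt z atTop y := by
  rw [mapClusterPt_atTop_iff_forall_mem_closure]
  intro M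
  have hfin : (y '' Iio M).Finite := (finite_Iio M).image y
  have hempty : interior (y '' Iio M) = ∅ :=
    interior_eq_empty_iff_dense_compl.2 (compl_eq_univ_sdiff _ ▸ dense_univ.sdiff_finite hfin)
  have hrange : range y = y '' Ici M ∪ y '' Iio M := by
    rw [← image_union, Ici_union_Iio, image_univ]
  rw [hrange, closure_union, hfin.isClosed.closure_eq,
    interior_union_isClosed_of_interior_empty isClosed_closure hempty] at hz
  exact interior_subset hz

end RightLimit

/-! ### Two-sided orbits -/

section Orbit

variable {X : Type*} {f : X → X}

theorem iterate_apply_of_semiconj_add_one {M : Type*} [AddMonoidWithOne M] {x : M → X}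
    (hx : Semiconj x (· + 1) f) (i : ℕ) (m : M) : f^[i] (x m) = x (m + i) := by
  simpa only [add_right_iterate, nsmul_one] using ((hx.iterate_right i).eq m).symm

theorem iterate_apply_add_of_backward {u : ℕ → X} (hu : ∀ k, f (u (k + 1)) = u k) (k j : ℕ) :
    f^[j] (u (k + j)) = u k := by
  induction j with
  | zero => rfl
  | succ j ih => rw [iterate_succ_apply, ← add_assoc, hu, ih]

/-- The two-sided sequence obtained by continuing a backward orbit `v` forwards under `f`. It is
indexed so that `v 0` sits at `-1`, the position of `c` in the renascent right limits of
`k ↦ f^[k + 1] c`. -/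
def twoSidedOrbit (f : X → X) (v : ℕ → X) : ℤ → X
  | .ofNat n => f^[n + 1] (v 0)
  | .negSucc n => v n

theorem semiconj_twoSidedOrbit {v : ℕ → X} (hv : ∀ k, f (v (k + 1)) = v k) :
    Semiconj (twoSidedOrbit f v) (· + 1) f
  | .ofNat n => iterate_succ_apply' f (n + 1) (v 0)
  | .negSucc 0 => rfl
  | .negSucc (n + 1) => (hv n).symm

theorem twoSidedOrbit_mem {I : Set X} (hmap : MapsTo f I I) {v : ℕ → X} (hv : ∀ k, v k ∈ I) :
    ∀ n, twoSidedOrbit f v n ∈ I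
  | .ofNat n => hmap.iterate (n + 1) (hv 0)
  | .negSucc n => hv n

theorem exists_backward_orbit_of_iterate {I : Set X} (hmap : MapsTo f I I) {N : ℕ} (hN : 0 < N)
    {u : ℕ → X} (hu : ∀ k, f^[N] (u (k + 1)) = u k) (huI : ∀ k, u k ∈ I) :
    ∃ v : ℕ → X, (∀ k, f (v (k + 1)) = v k) ∧ (∀ k, v (N * k) = u k) ∧ ∀ k, v k ∈ I := by
  obtain ⟨m, rfl⟩ := Nat.exists_eq_add_of_lt hN
  rw [zero_add] at hu ⊢
  -- `u i` is the point `(m + 1) * i` steps back, so the point `i` steps back is `f^[m * i] (u i)`.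
  refine ⟨fun i => f^[m * i] (u i), fun i => ?_, fun k => ?_, fun i => hmap.iterate _ (huI i)⟩
  · change f (f^[m * (i + 1)] (u (i + 1))) = f^[m * i] (u i)
    rw [← iterate_succ_apply' f, ← hu i, ← iterate_add_apply]
    rfl
  · change f^[m * ((m + 1) * k)] (u ((m + 1) * k)) = u k
    rw [Nat.mul_left_comm, iterate_mul, Nat.succ_mul, add_comm (m * k)]
    exact iterate_apply_add_of_backward hu k (m * k)

theorem isRightLimit_of_frequently_mapClusterPt [TopologicalSpace X] [FirstCountableTopology X]
    {I : Set X} (hmap : MapsTo f I I) (hcont : ContinuousOn f I)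
    {y : ℕ → X} (hy : Semiconj y (· + 1) f) (hyI : ∀ k, y k ∈ I)
    {x : ℤ → X} (hx : Semiconj x (· + 1) f) (hxI : ∀ n, x n ∈ I)
    (hcluster : ∃ᶠ m in atBot, MapClusterPt (x m) atTop y) : IsRightLimit y x := by
  refine isRightLimit_of_mapClusterPt (mapClusterPt_iff_frequently.2 fun s hs => ?_)
  rw [nhds_pi, Filter.mem_pi] at hs
  obtain ⟨F, hF, t, ht, hts⟩ := hs
  obtain ⟨m, hm, hmF⟩ := (hcluster.and_eventually <|
    (eventually_all_finite hF).2 fun n _ => eventually_le_atBot n).exists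
  have hnear : ∀ᶠ z in 𝓝[I] x m, ∀ n ∈ F, f^[(n - m).toNat] z ∈ t n := by
    refine (eventually_all_finite hF).2 fun n hn => ?_
    have hxn : f^[(n - m).toNat] (x m) = x n := by
      rw [iterate_apply_of_semiconj_add_one hx, Int.toNat_of_nonneg (sub_nonneg.2 (hmF n hn)),
        add_sub_cancel]
    exact (hcont.iterate hmap _ _ (hxI m)).eventually (hxn ▸ ht n)
  have hvisit : ∃ᶠ k in atTop, ∀ n ∈ F, f^[(n - m).toNat] (y k) ∈ t n :=
    (hm.frequently (eventually_nhdsWithin_iff.1 hnear)).mono fun k hk => hk (hyI k)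
  refine frequently_atTop.2 fun M => ?_
  obtain ⟨k, hk, hkF⟩ := frequently_atTop.1 hvisit (M + m.natAbs)
  refine ⟨(k - m).toNat, by omega, hts fun n hn => ?_⟩
  have hindex : (n + (k - m).toNat).toNat = k + (n - m).toNat := by
    have := hmF n hn
    omega
  simpa only [hindex, iterate_apply_of_semiconj_add_one hy, Nat.cast_id] using hkF n hn

end Orbit

/-! ### Codes and horseshoes -/

section Horseshoe

variable {X E ι : Type*}

theorem uncountable_nat_arrow [Nontrivial ι] : Uncountable (ℕ → ι) := by
  rw [← Cardinal.aleph0_lt_mk_iff]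
  simpa using Cardinal.cantor' Cardinal.aleph0 (Cardinal.one_lt_iff_nontrivial.2 ‹Nontrivial ι›)

theorem infinite_setOf_comp_unpair_ne {s t : ℕ → ι} (h : s ≠ t) :
    {k : ℕ | s k.unpair.1 ≠ t k.unpair.1}.Infinite := by
  obtain ⟨i, hi⟩ := Function.ne_iff.1 h
  have hinj : Injective fun j => Nat.pair i j := fun _ _ hj => (Nat.pair_eq_pair.1 hj).2
  exact infinite_of_injective_forall_mem hinj fun j => by simpa only [mem_ofPred, Nat.unpair_pair]

theorem exists_uncountable_pairwise_infinite_ne [Nontrivial ι] {κ : Type*} {P : (κ → E) → Prop}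
    {D : ι → Set E} (hD : Pairwise (Disjoint on D)) {m : ℕ → κ} (hm : Injective m)
    (h : ∀ t : ℕ → ι, ∃ b, P b ∧ ∀ k, b (m k) ∈ D (t k)) :
    ∃ B : Set (κ → E), ¬ B.Countable ∧ (∀ b ∈ B, P b) ∧
      ∀ b₁ ∈ B, ∀ b₂ ∈ B, b₁ ≠ b₂ → {n | b₁ n ≠ b₂ n}.Infinite := by
  choose b hP hb using fun t : ℕ → ι => h fun k => t k.unpair.1
  have hdiff : ∀ s t, s ≠ t → {n | b s n ≠ b t n}.Infinite := fun s t hst => by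
    refine ((infinite_setOf_comp_unpair_ne hst).image hm.injOn).mono ?_
    rintro _ ⟨k, hk, rfl⟩
    exact (hD hk).ne_of_mem (hb s k) (hb t k)
  have hinj : Injective b := fun s t hst => by
    by_contra hne
    simpa [hst] using hdiff s t hne
  have := uncountable_nat_arrow (ι := ι)
  refine ⟨range b, fun hB => not_countable_univ (α := ℕ → ι) ?_, forall_mem_range.2 hP, ?_⟩
  · simpa only [preimage_range] using hB.preimage hinj
  · rintro _ ⟨s, rfl⟩ _ ⟨t, rfl⟩ hne
    exact hdiff s t (ne_of_apply_ne b hne)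

/-- The sets `A i` form a horseshoe for `g` in `K`: each lies in `K` and is mapped over `K`. This is
what allows a point of `K` to be pulled back through the `A i` in any order. Disjointness is not
part of the notion: it is imposed on the images under an observable. -/
structure IsHorseshoe (g : X → X) (K : Set X) (A : ι → Set X) : Prop where
  subset : ∀ i, A i ⊆ K
  subset_image : ∀ i, K ⊆ g '' A i

theorem IsHorseshoe.exists_backward_itinerary {g : X → X} {K : Set X} {A : ι → Set X}
    (h : IsHorseshoe g K A) {c : X} (hc : c ∈ K) (t : ℕ → ι) :
    ∃ u : ℕ → X, u 0 = c ∧ (∀ k, g (u (k + 1)) = u k) ∧ ∀ k, u (k + 1) ∈ A (t k) := by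
  have : Nonempty X := ⟨c⟩
  have hpre : ∀ i, ∀ z ∈ K, ∃ w, w ∈ A i ∧ g w = z := fun i _ hz => h.subset_image i hz
  choose! p hpA hp using hpre
  let u : ℕ → X := fun n => Nat.rec c (fun k z => p (t k) z) n
  have huK : ∀ k, u k ∈ K := fun k => by
    induction k with
    | zero => exact hc
    | succ k ih => exact h.subset _ (hpA (t k) _ ih)
  exact ⟨u, rfl, fun k => hp (t k) _ (huK k), fun k => hpA (t k) _ (huK k)⟩

variable {f : X → X} {N : ℕ} {K I : Set X} {A : ι → Set X} {c : X}

theorem IsHorseshoe.exists_twoSidedOrbit (h : IsHorseshoe f^[N] K A) (hN : 0 < N)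
    (hmap : MapsTo f I I) (hKI : K ⊆ I) (hc : c ∈ K) (t : ℕ → ι) :
    ∃ x : ℤ → X, Semiconj x (· + 1) f ∧ (∀ n, x n ∈ I) ∧ (∀ n : ℕ, x n = f^[n + 1] c) ∧
      ∀ k, x (Int.negSucc (N * (k + 1))) ∈ A (t k) := by
  obtain ⟨u, rfl, hu, huA⟩ := h.exists_backward_itinerary hc t
  have huI : ∀ k, u k ∈ I
    | 0 => hKI hc
    | k + 1 => hKI (h.subset _ (huA k))
  obtain ⟨v, hv, hvu, hvI⟩ := exists_backward_orbit_of_iterate hmap hN hu huI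
  have hv0 : v 0 = u 0 := hvu 0
  refine ⟨twoSidedOrbit f v, semiconj_twoSidedOrbit hv, twoSidedOrbit_mem hmap hvI,
    fun n => congrArg f^[n + 1] hv0, fun k => ?_⟩
  exact mem_of_eq_of_mem (hvu (k + 1)) (huA k)

theorem injective_negSucc_mul_succ (hN : 0 < N) : Injective fun k => Int.negSucc (N * (k + 1)) :=
  fun _ _ h => Nat.succ_injective (Nat.eq_of_mul_eq_mul_left hN (Int.negSucc.inj h))

theorem frequently_atBot_of_forall_negSucc_mul_succ (hN : 0 < N) {p : ℤ → Prop}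
    (hp : ∀ k, p (Int.negSucc (N * (k + 1)))) : ∃ᶠ m in atBot, p m :=
  frequently_atBot.2 fun m => ⟨_, by
    have := Nat.le_mul_of_pos_left (m.natAbs + 1) hN
    omega, hp m.natAbs⟩

theorem IsHorseshoe.exists_uncountable_renascentRightLimit [Nontrivial ι] [TopologicalSpace X]
    [FirstCountableTopology X] [TopologicalSpace E] (h : IsHorseshoe f^[N] K A) (hN : 0 < N)
    (hmap : MapsTo f I I) (hcont : ContinuousOn f I) (hKI : K ⊆ I) (hc : c ∈ K)
    (hcluster : ∀ z ∈ K, MapClusterPt z atTop fun k => f^[k + 1] c)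
    {φ : X → E} (hφ : ContinuousOn φ I) (hdisj : Pairwise (Disjoint on fun i => φ '' A i)) :
    ∃ B : Set (ℤ → E), ¬ B.Countable ∧
      (∀ b ∈ B, IsRenascentRightLimit (fun k => φ (f^[k + 1] c)) b) ∧
      ∀ b₁ ∈ B, ∀ b₂ ∈ B, b₁ ≠ b₂ → {n | b₁ n ≠ b₂ n}.Infinite := by
  refine exists_uncountable_pairwise_infinite_ne hdisj (injective_negSucc_mul_succ hN) fun t => ?_
  obtain ⟨x, hx, hxI, hxc, hxA⟩ := h.exists_twoSidedOrbit hN hmap hKI hc t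
  have hyI : ∀ k, f^[k + 1] c ∈ I := fun k => hmap.iterate (k + 1) (hKI hc)
  have hlim : IsRightLimit (fun k => f^[k + 1] c) x :=
    isRightLimit_of_frequently_mapClusterPt hmap hcont
      (fun k => iterate_succ_apply' f (k + 1) c) hyI hx hxI <|
      frequently_atBot_of_forall_negSucc_mul_succ hN fun k => hcluster _ (h.subset _ (hxA k))
  exact ⟨fun n => φ (x n), ⟨hlim.comp_continuousOn hφ hyI hxI, fun n => congrArg φ (hxc n)⟩,
    fun k => mem_image_of_mem φ (hxA k)⟩

end Horseshoe

/-! ### Mixing interval maps -/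

/-- Topological mixing of `f` on the subspace `J`, stated with open sets of the ambient space.
Invariance of `J` under `f` is not part of the notion. -/
def IsTopologicallyMixingOn {X : Type*} [TopologicalSpace X] (f : X → X) (J : Set X) : Prop :=
  ∀ U V : Set X, IsOpen U → IsOpen V → (U ∩ J).Nonempty → (V ∩ J).Nonempty →
    ∀ᶠ n in atTop, (f^[n] '' (U ∩ J) ∩ (V ∩ J)).Nonempty

theorem IsTopologicallyMixingOn.eventually_subset_image_iterate {X : Type*}
    [ConditionallyCompleteLinearOrder X] [TopologicalSpace X] [OrderTopology X] [DenselyOrdered X]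
    {f : X → X} {α β : X} (hmix : IsTopologicallyMixingOn f (Icc α β)) {I : Set X}
    (hmap : MapsTo f I I) (hcont : ContinuousOn f I) {A : Set X} (hA : A.OrdConnected)
    (hAI : A ⊆ I) (hAJ : (interior A ∩ Icc α β).Nonempty) {K : Set X} (hK : IsCompact K)
    (hKJ : K ⊆ Ioo α β) : ∀ᶠ n in atTop, K ⊆ f^[n] '' A := by
  obtain rfl | hKne := K.eq_empty_or_nonempty
  · exact Eventually.of_forall fun _ => empty_subset _
  obtain ⟨p, hpK, hp⟩ := hK.exists_isLeast hKne
  obtain ⟨q, hqK, hq⟩ := hK.exists_isGreatest hKne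
  have hαβ : α ≤ β := ((hKJ hpK).1.trans (hKJ hpK).2).le
  filter_upwards [
    hmix _ _ isOpen_interior isOpen_Iio hAJ ⟨α, (hKJ hpK).1, left_mem_Icc.2 hαβ⟩,
    hmix _ _ isOpen_interior isOpen_Ioi hAJ ⟨β, (hKJ hqK).2, right_mem_Icc.2 hαβ⟩]
    with n ⟨_, ⟨u, hu, rfl⟩, hup⟩ ⟨_, ⟨v, hv, rfl⟩, hvq⟩ z hz
  have hsub : uIcc u v ⊆ A := hA.uIcc_subset (interior_subset hu.1) (interior_subset hv.1)
  obtain ⟨w, hw, hwz⟩ := intermediate_value_uIcc ((hcont.iterate hmap n).mono (hsub.trans hAI))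
    (Icc_subset_uIcc ⟨hup.1.le.trans (hp hz), (hq hz).trans hvq.1.le⟩)
  exact ⟨w, hsub hw, hwz⟩

theorem exists_Icc_subset_Ioo_mapsTo_of_continuousOn {E : Type*} [TopologicalSpace E] {φ : ℝ → E}
    {α β : ℝ} (hφ : ContinuousOn φ (Icc α β)) (hαβ : α < β) {x : ℝ} (hx : x ∈ Icc α β)
    {U : Set E} (hU : IsOpen U) (hxU : φ x ∈ U) :
    ∃ l r, (interior (Icc l r)).Nonempty ∧ Icc l r ⊆ Ioo α β ∧ MapsTo φ (Icc l r) U := by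
  have hIoo : ContinuousOn φ (Ioo α β) := hφ.mono Ioo_subset_Icc_self
  have : (𝓝[Ioo α β] x).NeBot := by
    rwa [← mem_closure_iff_nhdsWithin_neBot, closure_Ioo hαβ.ne]
  obtain ⟨w, hw, hwU⟩ := (eventually_mem_nhdsWithin.and <|
    ((hφ x hx).mono Ioo_subset_Icc_self).eventually (hU.mem_nhds hxU)).exists
  obtain ⟨l, r, -, hnhds, hsub⟩ := exists_Icc_mem_subset_of_mem_nhds <|
    (hIoo.isOpen_inter_preimage isOpen_Ioo hU).mem_nhds ⟨hw, hwU⟩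
  exact ⟨l, r, ⟨w, mem_interior_iff_mem_nhds.2 hnhds⟩, hsub.trans inter_subset_left,
    fun z hz => (hsub hz).2⟩

theorem IsTopologicallyMixingOn.exists_isHorseshoe {f : ℝ → ℝ} {I : Set ℝ} {c α β : ℝ}
    (hmix : IsTopologicallyMixingOn f (Icc α β)) (hmap : MapsTo f I I) (hcont : ContinuousOn f I)
    (hJI : Icc α β ⊆ I) (hc : c ∈ Ioo α β) {ι : Type*} [Finite ι] {l r : ι → ℝ}
    (hne : ∀ i, (interior (Icc (l i) (r i))).Nonempty) (hsub : ∀ i, Icc (l i) (r i) ⊆ Ioo α β) :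
    ∃ N K, 0 < N ∧ K ⊆ Ioo α β ∧ c ∈ K ∧ IsHorseshoe f^[N] K fun i => Icc (l i) (r i) := by
  have hK : IsCompact (insert c (⋃ i, Icc (l i) (r i))) :=
    (isCompact_iUnion fun _ => isCompact_Icc).insert c
  have hKJ : insert c (⋃ i, Icc (l i) (r i)) ⊆ Ioo α β :=
    insert_subset hc (iUnion_subset hsub)
  have hJ : ∀ i, Icc (l i) (r i) ⊆ Icc α β := fun i => (hsub i).trans Ioo_subset_Icc_self
  have hcover : ∀ i, ∀ᶠ n in atTop, insert c (⋃ i, Icc (l i) (r i)) ⊆ f^[n] '' Icc (l i) (r i) :=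
    fun i => hmix.eventually_subset_image_iterate hmap hcont ordConnected_Icc
      ((hJ i).trans hJI) ((hne i).mono fun _ hz => ⟨hz, hJ i (interior_subset hz)⟩) hK hKJ
  obtain ⟨N, hN, hNcover⟩ := ((eventually_gt_atTop 0).and (eventually_all.2 hcover)).exists
  exact ⟨N, _, hN, hKJ, mem_insert c _,
    fun i => (subset_iUnion (fun i => Icc (l i) (r i)) i).trans (subset_insert c _), hNcover⟩

theorem stmt_5_general {E : Type*} [TopologicalSpace E] [T2Space E] {f : ℝ → ℝ} {I : Set ℝ}
    {c α β : ℝ} (hmap : MapsTo f I I) (hcont : ContinuousOn f I) (hJI : Icc α β ⊆ I)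
    (hc : c ∈ Ioo α β) (hmix : IsTopologicallyMixingOn f (Icc α β))
    (hdense : Icc α β ⊆ closure (range fun k : ℕ => f^[k + 1] c))
    {φ : ℝ → E} (hφ : ContinuousOn φ I) (hne : ∃ x ∈ Icc α β, ∃ y ∈ Icc α β, φ x ≠ φ y) :
    ∃ B : Set (ℤ → E), ¬ B.Countable ∧
      (∀ b ∈ B, IsRenascentRightLimit (fun k => φ (f^[k + 1] c)) b) ∧
      ∀ b₁ ∈ B, ∀ b₂ ∈ B, b₁ ≠ b₂ → {n | b₁ n ≠ b₂ n}.Infinite := by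
  obtain ⟨x, hx, y, hy, hxy⟩ := hne
  obtain ⟨U, V, hU, hV, hxU, hyV, hUV⟩ := t2_separation hxy
  have hαβ : α < β := hc.1.trans hc.2
  have hinterval : ∀ i : Bool, ∃ l r, (interior (Icc l r)).Nonempty ∧ Icc l r ⊆ Ioo α β ∧
      MapsTo φ (Icc l r) (cond i U V)
    | true => exists_Icc_subset_Ioo_mapsTo_of_continuousOn (hφ.mono hJI) hαβ hx hU hxU
    | false => exists_Icc_subset_Ioo_mapsTo_of_continuousOn (hφ.mono hJI) hαβ hy hV hyV
  choose l r hint hsub hφUV using hinterval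
  obtain ⟨N, K, hN, hKJ, hcK, hA⟩ := hmix.exists_isHorseshoe hmap hcont hJI hc hint hsub
  have hcluster : ∀ z ∈ K, MapClusterPt z atTop fun k => f^[k + 1] c := fun z hz =>
    mapClusterPt_atTop_of_mem_interior_closure_range <|
      interior_mono hdense (interior_Icc (a := α) ▸ hKJ hz)
  have hdisj : Pairwise (Disjoint on fun i => φ '' Icc (l i) (r i)) :=
    (pairwise_disjoint_on_bool.2 hUV).mono fun i j hij =>
      hij.mono (hφUV i).image_subset (hφUV j).image_subset
  exact hA.exists_uncountable_renascentRightLimit hN hmap hcont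
    ((hKJ.trans Ioo_subset_Icc_self).trans hJI) hcK hcluster hφ hdisj

/-! ### Expanding unimodal maps -/

theorem mul_sub_lt_image_sub_of_lt_derivWithin {D : Set ℝ} (hD : Convex ℝ D) {f : ℝ → ℝ}
    (hf : DifferentiableOn ℝ f D) {C : ℝ} (hC : ∀ x ∈ interior D, C < derivWithin f D x) :
    ∀ᵉ (x ∈ D) (y ∈ D), x < y → C * (y - x) < f y - f x :=
  hD.mul_sub_lt_image_sub_of_lt_deriv hf.continuousOn (hf.mono interior_subset) fun x hx =>
    derivWithin_of_mem_nhds (f := f) (mem_interior_iff_mem_nhds.1 hx) ▸ hC x hx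

theorem image_sub_lt_mul_sub_of_derivWithin_lt {D : Set ℝ} (hD : Convex ℝ D) {f : ℝ → ℝ}
    (hf : DifferentiableOn ℝ f D) {C : ℝ} (hC : ∀ x ∈ interior D, derivWithin f D x < C) :
    ∀ᵉ (x ∈ D) (y ∈ D), x < y → f y - f x < C * (y - x) :=
  hD.image_sub_lt_mul_sub_of_deriv_lt hf.continuousOn (hf.mono interior_subset) fun x hx =>
    derivWithin_of_mem_nhds (f := f) (mem_interior_iff_mem_nhds.1 hx) ▸ hC x hx

theorem turningPoint_mem_Ioo_of_expanding {f : ℝ → ℝ} {a b c : ℝ} (hc : c ∈ Ioo a b)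
    (hfa : f a = a) (hfc : f c ≤ b) (hL : DifferentiableOn ℝ f (Icc a c))
    (hR : DifferentiableOn ℝ f (Icc c b)) (hdL : ∀ x ∈ Icc a c, 1 < derivWithin f (Icc a c) x)
    (hdR : ∀ x ∈ Icc c b, derivWithin f (Icc c b) x < -1) :
    c ∈ Ioo (f^[2] c) (f^[1] c) := by
  have hcfc : c < f c := by
    have := mul_sub_lt_image_sub_of_lt_derivWithin (convex_Icc a c) hL
      (fun x hx => hdL x (interior_subset hx)) a (left_mem_Icc.2 hc.1.le)
      c (right_mem_Icc.2 hc.1.le) hc.1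
    linarith
  have hffc : f (f c) < c := by
    have := image_sub_lt_mul_sub_of_derivWithin_lt (convex_Icc c b) hR
      (fun x hx => hdR x (interior_subset hx)) c (left_mem_Icc.2 hc.2.le) (f c) ⟨hcfc.le, hfc⟩ hcfc
    linarith
  exact ⟨hffc, hcfc⟩

/-- If the postcritical orbit is dense in `[c₂, c₁]` and `φ` is continuous and not
`f`-symmetric on `[c₂, c₁]`, then there is an uncountable family of renascent right limits
of `(φ(c_{k+1}))_{k ≥ 0}`, any two distinct members of which differ at infinitely many
indices (so the quotient by "differ at finitely many indices" is uncountable). -/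
theorem stmt_5
    -- Setup: piecewise expanding unimodal map
    (f : ℝ → ℝ) (a b c : ℝ)
    (hab : a < b) (hc : c ∈ Set.Ioo a b)
    (hmap : Set.MapsTo f (Set.Icc a b) (Set.Icc a b))
    (hcont : ContinuousOn f (Set.Icc a b))
    (hfa : f a = a) (hfb : f b = a)
    (hC3L : ContDiffOn ℝ 3 f (Set.Icc a c))
    (hC3R : ContDiffOn ℝ 3 f (Set.Icc c b))
    (hd1 : ∀ x ∈ Set.Icc a c, 1 < derivWithin f (Set.Icc a c) x)
    (hd2 : ∀ x ∈ Set.Icc c b, derivWithin f (Set.Icc c b) x < -1)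
    (hnotper : ∀ n : ℕ, 1 ≤ n → f^[n] c ≠ c)
    (hinf : (Set.range fun k : ℕ => f^[k + 1] c).Infinite)
    (hmix : ∀ U V : Set ℝ,
      (∃ U₀, IsOpen U₀ ∧ U = U₀ ∩ Set.Icc (f^[2] c) (f^[1] c)) →
      (∃ V₀, IsOpen V₀ ∧ V = V₀ ∩ Set.Icc (f^[2] c) (f^[1] c)) →
      U.Nonempty → V.Nonempty → ∃ N : ℕ, ∀ n, N ≤ n → (f^[n] '' U ∩ V).Nonempty)
    -- density of the postcritical orbit in [c₂, c₁]
    (hdense : Set.Icc (f^[2] c) (f^[1] c) ⊆ closure (Set.range fun k : ℕ => f^[k + 1] c))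
    -- the observable: continuous, not f-symmetric on [c₂, c₁]
    (φ : ℝ → ℂ) (hφ : ContinuousOn φ (Set.Icc a b))
    (hnotsym : ∃ x ∈ Set.Icc (f^[2] c) (f^[1] c), ∃ y ∈ Set.Icc (f^[2] c) (f^[1] c),
      f x = f y ∧ f x ∈ Set.Icc (f^[2] c) (f^[1] c) ∧ φ x ≠ φ y) :
    ∃ B : Set (ℤ → ℂ), ¬ B.Countable ∧
      (∀ bb ∈ B, IsRightLimit (fun k : ℕ => φ (f^[k + 1] c)) bb ∧
        ∀ n : ℕ, bb (n : ℤ) = φ (f^[n + 1] c)) ∧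
      (∀ bb₁ ∈ B, ∀ bb₂ ∈ B, bb₁ ≠ bb₂ → {n : ℤ | bb₁ n ≠ bb₂ n}.Infinite) := by
  have hcI := Set.Ioo_subset_Icc_self hc
  have hcJ := turningPoint_mem_Ioo_of_expanding hc hfa (hmap hcI).2
    (hC3L.differentiableOn (by norm_num)) (hC3R.differentiableOn (by norm_num)) hd1 hd2
  have hJI := Set.Icc_subset_Icc (hmap.iterate 2 hcI).1 (hmap.iterate 1 hcI).2
  have hmixJ : IsTopologicallyMixingOn f (Set.Icc (f^[2] c) (f^[1] c)) := fun U V hU hV hUJ hVJ =>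
    eventually_atTop.2 (hmix _ _ ⟨U, hU, rfl⟩ ⟨V, hV, rfl⟩ hUJ hVJ)
  obtain ⟨x, hx, y, hy, -, -, hxy⟩ := hnotsym
  exact stmt_5_general hmap hcont hJI hcJ hmixJ hdense hφ ⟨x, hx, y, hy, hxy⟩
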